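/- Fix k ≥ 1 and consider P_k[X,Y] = K^{M_k^{(2)}} with the action of the frieze group F_6 ≅ ℤ × ℤ/2ℤ induced by t(a, b) = (a + 1, b + 1) and h(a, b) = (b, a). Let W = (K ⊕ K)^ℤ with ℤ acting by the shift and the generator of ℤ/2ℤ acting by swapping the two coordinates in every position, and let U = K^ℤ with ℤ acting by the shift and ℤ/2ℤ acting trivially. Then, as representations of ℤ × ℤ/2ℤ over K: P_1[X,Y] is isomorphic to W; for odd k ≥ 3, P_k[X,Y] is isomorphic to a countably infinite product of copies of W; and for even k, P_k[X,Y] is isomorphic to the product of a countably infinite product of copies of W with a countably infinite product of copies of U. -/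

import Mathlib

/-!
Dividing the sum of the elements of a pair `(a, b)` by `k`, rounded down, gives a `ℤ`-equivariant
map `M_k^{(2)} → ℤ`. Hence `M_k^{(2)} ≅ ℤ × R` with `R` the pairs of level `0`, where `ℤ`
translates the first factor and `h` acts on the second. Splitting `R` into two-element and
one-element orbits of `h` splits `P_k[X,Y]` into copies of `W` and `U`. For odd `k` there are no
fixed pairs, since `|a| ≠ |b|`. For even `k` there are fixed pairs, but for `k = 2` only one of
level `0`, namely `({0}, {0})`. When `2` is invertible, `W ≅ U ⊕ U⁻`, where `h` acts on `U⁻ = K^ℤ`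
by `-1`, so an infinite product of copies of `W` can absorb or give off any countable number of
copies of `U`.
-/

/-- Translate every element of a multiset of integers by `z`. -/
def shiftM (m : Multiset ℤ) (z : ℤ) : Multiset ℤ := m.map (· + z)

/-- `P_k[X,Y]`, realized via pairs of multisets of total cardinality `k`. -/
abbrev Mk2 (k : ℕ) := {p : Multiset ℤ × Multiset ℤ //
  Multiset.card p.1 + Multiset.card p.2 = k}

/-- The action of the translation `t` of `F₆` on `P_k[X,Y]`: `(t · c)(p) = c(t⁻¹ p)`. -/
def tAct (K : Type*) [Field K] (k : ℕ) (c : Mk2 k → K) : Mk2 k → K :=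
  fun p => c ⟨(shiftM p.1.1 (-1), shiftM p.1.2 (-1)), by simpa [shiftM] using p.2⟩

/-- The action of the horizontal reflection `h` of `F₆` on `P_k[X,Y]`:
`(h · c)(a, b) = c(b, a)`. -/
def hAct (K : Type*) [Field K] (k : ℕ) (c : Mk2 k → K) : Mk2 k → K :=
  fun p => c ⟨(p.1.2, p.1.1), by rw [add_comm]; exact p.2⟩

open Function

section FriezeIso

variable {K V V' V'' : Type*} [Semiring K] [AddCommMonoid V] [Module K V]
  [AddCommMonoid V'] [Module K V'] [AddCommMonoid V''] [Module K V'']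

variable (K) in
/-- Isomorphism of representations of `F₆` over `K`. A representation is encoded by the maps by
which the translation and the reflection act. -/
def FriezeIso (t h : V → V) (t' h' : V' → V') : Prop :=
  ∃ Φ : V ≃ₗ[K] V', Semiconj Φ t t' ∧ Semiconj Φ h h'

namespace FriezeIso

variable {t h : V → V} {t' h' : V' → V'} {t'' h'' : V'' → V''}

theorem symm : FriezeIso K t h t' h' → FriezeIso K t' h' t h
  | ⟨Φ, ht, hh⟩ => ⟨Φ.symm, ht.inverse_left Φ.left_inv Φ.right_inv,
      hh.inverse_left Φ.left_inv Φ.right_inv⟩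

theorem trans : FriezeIso K t h t' h' → FriezeIso K t' h' t'' h'' → FriezeIso K t h t'' h''
  | ⟨Φ, ht, hh⟩, ⟨Ψ, ht', hh'⟩ => ⟨Φ.trans Ψ, ht.trans ht', hh.trans hh'⟩

end FriezeIso

end FriezeIso

section ShiftAndSwap

variable {K I I' J J' M A : Type*}

/-- The translation on `(A^ℤ)^I`: it shifts each of the `I` sequences. -/
def shift (f : I → ℤ → A) : I → ℤ → A := fun i n => f i (n - 1)

/-- The reflection on `W^I`: it swaps the two coordinates in every position. -/
def swapEach (w : I → ℤ → A × A) : I → ℤ → A × A := fun i n => (w i n).swap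

theorem friezeIso_prod_of_isEmpty [Semiring K] [IsEmpty J] :
    FriezeIso K (Prod.map shift shift : (I → ℤ → K × K) × (J → ℤ → K) → _) (Prod.map swapEach id)
      (shift : (I → ℤ → K × K) → _) swapEach :=
  ⟨LinearEquiv.prodUnique, fun _ => rfl, fun _ => rfl⟩

theorem friezeIso_pi_of_unique [Semiring K] [Unique I] :
    FriezeIso K (shift : (I → ℤ → K × K) → _) swapEach
      (fun w n => w (n - 1) : (ℤ → K × K) → _) (fun w n => (w n).swap) :=
  ⟨LinearEquiv.funUnique I K (ℤ → K × K), fun _ => rfl, fun _ => rfl⟩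

variable (K M) in
/-- The change of coordinates `(x, y) ↦ (x + y, x - y)`, which diagonalizes the swap. -/
def addSubEquiv [Ring K] [Invertible (2 : K)] [AddCommGroup M] [Module K M] :
    (M × M) ≃ₗ[K] M × M where
  toFun p := (p.1 + p.2, p.1 - p.2)
  invFun p := ((⅟2 : K) • (p.1 + p.2), (⅟2 : K) • (p.1 - p.2))
  map_add' p q := by ext <;> simp only [Prod.fst_add, Prod.snd_add] <;> abel
  map_smul' a p := by ext <;> simp [smul_add, smul_sub]
  left_inv p := by ext <;> simp [← two_smul K, smul_smul]
  right_inv p := by ext <;> simp [← smul_add, ← smul_sub, ← two_smul K, smul_smul]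

theorem addSubEquiv_swap [Ring K] [Invertible (2 : K)] [AddCommGroup M] [Module K M] (p : M × M) :
    addSubEquiv K M p.swap = ((addSubEquiv K M p).1, -(addSubEquiv K M p).2) :=
  Prod.ext (add_comm _ _) (neg_sub _ _).symm

variable (K I J) in
/-- The decomposition of `W^I × U^J` into `U^(I ⊕ J)`, on which the reflection acts trivially, and
`U^I`, on which it acts by `-1`. -/
def symmAltEquiv [Ring K] [Invertible (2 : K)] :
    ((I → ℤ → K × K) × (J → ℤ → K)) ≃ₗ[K] (I ⊕ J → ℤ → K) × (I → ℤ → K) where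
  toFun w := (Sum.elim (fun i n => (addSubEquiv K K (w.1 i n)).1) w.2,
    fun i n => (addSubEquiv K K (w.1 i n)).2)
  invFun v := (fun i n => (addSubEquiv K K).symm (v.1 (.inl i) n, v.2 i n),
    fun j => v.1 (.inr j))
  map_add' w w' := Prod.ext (by ext (i | j) n <;> simp) (by ext i n; simp)
  map_smul' a w := Prod.ext (by ext (i | j) n <;> simp) (by ext i n; simp)
  left_inv w := by simp
  right_inv v := Prod.ext (by ext (i | j) n <;> simp) (by ext i n; simp)

theorem friezeIso_symmAlt [Ring K] [Invertible (2 : K)] :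
    FriezeIso K (Prod.map shift shift : (I → ℤ → K × K) × (J → ℤ → K) → _) (Prod.map swapEach id)
      (Prod.map shift shift : (I ⊕ J → ℤ → K) × (I → ℤ → K) → _) (Prod.map id Neg.neg) := by
  refine ⟨symmAltEquiv K I J, fun w => ?_, fun w => ?_⟩
  · exact Prod.ext (by ext (i | j) n <;> rfl) rfl
  · refine Prod.ext (funext ?_) (funext₂ fun i n => ?_)
    · rintro (i | j)
      · exact funext fun n => (Prod.ext_iff.1 (addSubEquiv_swap (K := K) (w.1 i n))).1
      · rfl
    · exact (Prod.ext_iff.1 (addSubEquiv_swap (K := K) (w.1 i n))).2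

theorem friezeIso_symmAlt_congr [Ring K] (e : I ≃ I') :
    FriezeIso K (Prod.map shift shift : (I → ℤ → K) × (J → ℤ → K) → _) (Prod.map id Neg.neg)
      (Prod.map shift shift : (I' → ℤ → K) × (J → ℤ → K) → _) (Prod.map id Neg.neg) :=
  ⟨(LinearEquiv.funCongrLeft K (ℤ → K) e.symm).prodCongr (.refl K _), fun _ => rfl, fun _ => rfl⟩

theorem friezeIso_prod_of_countable [Ring K] [Invertible (2 : K)] [Infinite I] [Countable I]
    [Countable J] [Countable J'] :
    FriezeIso K (Prod.map shift shift : (I → ℤ → K × K) × (J → ℤ → K) → _) (Prod.map swapEach id)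
      (Prod.map shift shift : (I → ℤ → K × K) × (J' → ℤ → K) → _) (Prod.map swapEach id) := by
  obtain ⟨g⟩ := nonempty_equiv_of_countable (α := I ⊕ J) (β := I ⊕ J')
  exact (friezeIso_symmAlt.trans (friezeIso_symmAlt_congr g)).trans friezeIso_symmAlt.symm

/-- A two-element orbit of `η` on the second factor of
`ℤ × ((I ⊕ I) ⊕ J)` contributes a copy of `W`, a fixed point a copy of `U`. -/
theorem friezeIso_comp {X : Type*} [Semiring K] {τ η : X → X} (E : ℤ × ((I ⊕ I) ⊕ J) ≃ X)
    (hτ : Semiconj E (Prod.map (· - 1) id) τ)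
    (hη : Semiconj E (Prod.map id (Sum.map Sum.swap id)) η) :
    FriezeIso K (· ∘ τ : (X → K) → _) (· ∘ η)
      (Prod.map shift shift : (I → ℤ → K × K) × (J → ℤ → K) → _) (Prod.map swapEach id) := by
  let Ψ : (ℤ × ((I ⊕ I) ⊕ J) → K) ≃ₗ[K] (I → ℤ → K × K) × (J → ℤ → K) :=
    { toFun c := (fun i n => (c (n, .inl (.inl i)), c (n, .inl (.inr i))), fun j n => c (n, .inr j))
      invFun w x := Sum.elim (Sum.elim (fun i => (w.1 i x.1).1) (fun i => (w.1 i x.1).2))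
        (fun j => w.2 j x.1) x.2
      map_add' _ _ := rfl
      map_smul' _ _ := rfl
      left_inv c := by ext ⟨n, (i | i) | j⟩ <;> rfl
      right_inv _ := rfl }
  refine ⟨(LinearEquiv.funCongrLeft K K E).trans Ψ, fun c => ?_, fun c => ?_⟩
  · exact congrArg (fun f => Ψ (c ∘ f)) hτ.comp_eq.symm
  · exact congrArg (fun f => Ψ (c ∘ f)) hη.comp_eq.symm

end ShiftAndSwap

section Involution

variable {R I : Type*} {σ : R → R} {ι : I → R}

/-- `ι` enumerates a system of representatives of the two-element orbits of the involution `σ`. -/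
structure IsTransversal (σ : R → R) (ι : I → R) : Prop where
  injective : Injective ι
  apply_ne : ∀ i j, σ (ι i) ≠ ι j
  mem_range_or : ∀ r, σ r ≠ r → r ∈ Set.range ι ∨ σ r ∈ Set.range ι

theorem IsTransversal.exists_equiv (hι : IsTransversal σ ι) (hσ : Involutive σ) :
    ∃ e : (I ⊕ I) ⊕ fixedPoints σ ≃ R, Semiconj e (Sum.map Sum.swap id) σ := by
  let F : (I ⊕ I) ⊕ fixedPoints σ → R := Sum.elim (Sum.elim ι (σ ∘ ι)) Subtype.val
  have ι_ne_fixed (i : I) (q : fixedPoints σ) : ι i ≠ q := fun h =>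
    hι.apply_ne i i (by rw [h]; exact q.2)
  have F_injective : Injective F := by
    refine (hι.injective.sumElim (hσ.injective.comp hι.injective)
      fun i j => (hι.apply_ne j i).symm).sumElim Subtype.val_injective ?_
    rintro (i | i) q h
    · exact ι_ne_fixed i q h
    · exact ι_ne_fixed i q (hσ.injective (h.trans q.2.symm))
  have F_surjective : Surjective F := fun r => by
    by_cases hr : σ r = r
    · exact ⟨.inr ⟨r, hr⟩, rfl⟩
    · rcases hι.mem_range_or r hr with ⟨i, hi⟩ | ⟨i, hi⟩
      · exact ⟨.inl (.inl i), hi⟩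
      · exact ⟨.inl (.inr i), (congrArg σ hi).trans (hσ r)⟩
  refine ⟨.ofBijective F ⟨F_injective, F_surjective⟩, ?_⟩
  rintro ((i | i) | q)
  · rfl
  · exact (hσ (ι i)).symm
  · exact q.2.symm

theorem exists_isTransversal_nat [Countable R] (hσ : Involutive σ)
    (hinf : {r | σ r ≠ r}.Infinite) : ∃ ι : ℕ → R, IsTransversal σ ι := by
  obtain ⟨f, hf⟩ := exists_injective_nat R
  let T : Set R := {r | f r < f (σ r)}
  have mem_or (r : R) (hr : σ r ≠ r) : r ∈ T ∨ σ r ∈ T :=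
    (hf.ne hr).symm.lt_or_gt.imp id fun h => by simpa only [T, Set.mem_ofPred_eq, hσ r] using h
  have T_infinite : T.Infinite := fun hT => hinf <| (hT.union (hT.image σ)).subset fun r hr =>
    (mem_or r hr).imp id fun h => ⟨σ r, h, hσ r⟩
  have : Infinite T := T_infinite.to_subtype
  obtain ⟨g⟩ := nonempty_equiv_of_countable (α := ℕ) (β := T)
  refine ⟨fun n => g n, Subtype.val_injective.comp g.injective, fun m n h => ?_, fun r hr => ?_⟩
  · have hm : f (g m) < f (σ (g m)) := (g m).2
    have hn : f (g n) < f (σ (g n)) := (g n).2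
    rw [← h, hσ] at hn
    exact hm.asymm hn
  · have mem_range (r : R) (h : r ∈ T) : r ∈ Set.range fun n => (g n : R) :=
      ⟨g.symm ⟨r, h⟩, congrArg Subtype.val (g.apply_symm_apply _)⟩
    exact (mem_or r hr).imp (mem_range r) (mem_range (σ r))

end Involution

/-- If `f : X → G` commutes with the action of `G`, then every orbit meets the zero fibre of `f`
in exactly one point, and the action identifies `X` with `G` times this fibre. -/
def prodZeroFiberEquiv {G X : Type*} [AddGroup G] [AddAction G X] (f : X → G)
    (hf : ∀ g x, f (g +ᵥ x) = g + f x) : G × {x // f x = 0} ≃ X where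
  toFun y := y.1 +ᵥ y.2.1
  invFun x := (f x, ⟨-f x +ᵥ x, by rw [hf, neg_add_cancel]⟩)
  left_inv := by
    rintro ⟨g, x, hx⟩
    have hfg : f (g +ᵥ x) = g := by rw [hf, hx, add_zero]
    ext
    · exact hfg
    · simp only [hfg, neg_vadd_vadd]
  right_inv x := vadd_neg_vadd _ x

namespace Mk2

variable {k : ℕ}

/-- The translation action of `ℤ` on pairs of multisets. -/
instance : AddAction ℤ (Mk2 k) where
  vadd z p := ⟨(shiftM p.1.1 z, shiftM p.1.2 z), by simpa [shiftM] using p.2⟩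
  zero_vadd p := Subtype.ext (by simp [HVAdd.hVAdd, shiftM])
  add_vadd y z p := Subtype.ext (by
    simp [HVAdd.hVAdd, shiftM, Multiset.map_map, add_assoc, add_comm y z])

/-- The horizontal reflection on pairs of multisets. -/
def reflect (p : Mk2 k) : Mk2 k := ⟨p.1.swap, by rw [add_comm]; exact p.2⟩

/-- The average of all elements of a pair of multisets, rounded down. It is used to select a
representative of each translation orbit. -/
def level (p : Mk2 k) : ℤ := (p.1.1.sum + p.1.2.sum) / k

theorem level_vadd [NeZero k] (z : ℤ) (p : Mk2 k) : level (z +ᵥ p) = z + level p := by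
  have sum_shiftM (m : Multiset ℤ) : (shiftM m z).sum = m.sum + m.card * z := by
    simp [shiftM, Multiset.sum_map_add]
  have hcard : ((p.1.1.card : ℤ) + p.1.2.card) = k := mod_cast p.2
  have sum_vadd : (shiftM p.1.1 z).sum + (shiftM p.1.2 z).sum = p.1.1.sum + p.1.2.sum + z * k := by
    rw [sum_shiftM, sum_shiftM, ← hcard]
    ring
  calc level (z +ᵥ p) = (p.1.1.sum + p.1.2.sum + z * k) / k := congrArg (· / (k : ℤ)) sum_vadd
    _ = z + level p := by
      rw [Int.add_mul_ediv_right _ _ (NeZero.ne (k : ℤ)), add_comm, level]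

theorem level_reflect (p : Mk2 k) : level (reflect p) = level p :=
  congrArg (· / (k : ℤ)) (add_comm _ _)

/-- The pairs of level `0`: one representative of each translation orbit. -/
abbrev LevelZero (k : ℕ) := {p : Mk2 k // level p = 0}

namespace LevelZero

/-- The horizontal reflection on the pairs of level `0`. -/
def reflect (r : LevelZero k) : LevelZero k := ⟨r.1.reflect, (level_reflect r.1).trans r.2⟩

theorem reflect_involutive : Involutive (reflect : LevelZero k → _) := fun _ => rfl

theorem isEmpty_fixedPoints_reflect (hk : Odd k) :
    IsEmpty (fixedPoints (reflect : LevelZero k → _)) := by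
  refine ⟨fun ⟨r, hr⟩ => Nat.not_even_iff_odd.2 hk ⟨r.1.1.1.card, ?_⟩⟩
  have hcard : r.1.1.2.card = r.1.1.1.card := congrArg (fun r : LevelZero k => r.1.1.1.card) hr
  exact r.1.2.symm.trans (congrArg (r.1.1.1.card + ·) hcard)

theorem infinite_reflect_ne (hk : 2 ≤ k) : {r : LevelZero k | reflect r ≠ r}.Infinite := by
  let a (m : ℕ) : Multiset ℤ := (m : ℤ) ::ₘ (-(m : ℤ)) ::ₘ Multiset.replicate (k - 2) 0
  have card_a (m : ℕ) : (a m).card = k := by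
    simp only [a, Multiset.card_cons, Multiset.card_replicate]
    omega
  have a_injective : Injective a := fun m m' h => by
    have two_mul_eq : m + m = m' + m' := by
      simpa [a] using congrArg (fun s => (s.map Int.natAbs).sum) h
    omega
  let r (m : ℕ) : LevelZero k := ⟨⟨(a m, 0), by simp [card_a]⟩, by simp [level, a]⟩
  refine Set.infinite_of_injective_forall_mem (f := r)
    (fun m m' h => a_injective (congrArg (fun r : LevelZero k => r.1.1.1) h)) fun m h => ?_
  have k_eq_zero : k = 0 := by
    simpa [r, reflect, Mk2.reflect, card_a] using congrArg (fun r : LevelZero k => r.1.1.2.card) h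
  omega

/-- The pair `({0}, ∅)`, that is, the monomial `x₀`. -/
def x₀ : LevelZero 1 := ⟨⟨({0}, 0), rfl⟩, rfl⟩

theorem eq_x₀_or_reflect_eq_x₀ (r : LevelZero 1) : r = x₀ ∨ reflect r = x₀ := by
  obtain ⟨⟨⟨a, b⟩, hcard⟩, hlevel⟩ := r
  rcases Nat.add_eq_one_iff.1 hcard with ⟨ha, hb⟩ | ⟨ha, hb⟩
  · obtain ⟨y, rfl⟩ := Multiset.card_eq_one.1 hb
    obtain rfl := Multiset.card_eq_zero.1 ha
    obtain rfl : y = 0 := by simpa [level] using hlevel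
    exact .inr rfl
  · obtain ⟨x, rfl⟩ := Multiset.card_eq_one.1 ha
    obtain rfl := Multiset.card_eq_zero.1 hb
    obtain rfl : x = 0 := by simpa [level] using hlevel
    exact .inl rfl

theorem isTransversal_x₀ : IsTransversal reflect fun _ : Unit => x₀ where
  injective := injective_of_subsingleton _
  apply_ne _ _ h := by
    simpa [reflect, Mk2.reflect, x₀] using congrArg (fun r : LevelZero 1 => r.1.1.1.card) h
  mem_range_or r _ := (eq_x₀_or_reflect_eq_x₀ r).imp (fun h => ⟨(), h.symm⟩) fun h => ⟨(), h.symm⟩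

end LevelZero

end Mk2

section Decomposition

open Mk2

variable {K : Type*} [Field K] {k : ℕ}

theorem friezeIso_of_isTransversal [NeZero k] {I : Type*} {ι : I → LevelZero k}
    (hι : IsTransversal LevelZero.reflect ι) :
    FriezeIso K (tAct K k) (hAct K k)
      (Prod.map shift shift :
        (I → ℤ → K × K) × (fixedPoints (LevelZero.reflect (k := k)) → ℤ → K) → _)
      (Prod.map swapEach id) := by
  obtain ⟨e, he⟩ := hι.exists_equiv LevelZero.reflect_involutive
  let E := ((Equiv.refl ℤ).prodCongr e).trans (prodZeroFiberEquiv level level_vadd)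
  refine friezeIso_comp (τ := ((-1 : ℤ) +ᵥ ·)) (η := Mk2.reflect) E (fun ⟨n, x⟩ => ?_)
    fun ⟨n, x⟩ => ?_
  · change (n - 1) +ᵥ (e x).1 = (-1 : ℤ) +ᵥ n +ᵥ (e x).1
    rw [vadd_vadd, sub_eq_neg_add]
  · exact congrArg (fun r : LevelZero k => n +ᵥ r.1) (he x)

theorem friezeIso_one : FriezeIso K (tAct K 1) (hAct K 1)
    (fun w n => w (n - 1) : (ℤ → K × K) → _) (fun w n => (w n).swap) :=
  have := LevelZero.isEmpty_fixedPoints_reflect odd_one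
  ((friezeIso_of_isTransversal LevelZero.isTransversal_x₀).trans friezeIso_prod_of_isEmpty).trans
    friezeIso_pi_of_unique

theorem friezeIso_odd (hodd : Odd k) (hk : 3 ≤ k) : FriezeIso K (tAct K k) (hAct K k)
    (shift : (ℕ → ℤ → K × K) → _) swapEach := by
  have : NeZero k := ⟨by omega⟩
  have := LevelZero.isEmpty_fixedPoints_reflect hodd
  obtain ⟨ι, hι⟩ := exists_isTransversal_nat LevelZero.reflect_involutive
    (LevelZero.infinite_reflect_ne (k := k) (by omega))
  exact (friezeIso_of_isTransversal hι).trans friezeIso_prod_of_isEmpty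

theorem friezeIso_even [NeZero (2 : K)] [NeZero k] (heven : Even k) :
    FriezeIso K (tAct K k) (hAct K k)
      (Prod.map shift shift : (ℕ → ℤ → K × K) × (ℕ → ℤ → K) → _) (Prod.map swapEach id) := by
  have := invertibleOfNonzero (NeZero.ne (2 : K))
  have hk : 2 ≤ k := Nat.le_of_dvd (NeZero.pos k) heven.two_dvd
  obtain ⟨ι, hι⟩ := exists_isTransversal_nat LevelZero.reflect_involutive
    (LevelZero.infinite_reflect_ne hk)
  exact (friezeIso_of_isTransversal hι).trans friezeIso_prod_of_countable

end Decomposition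

theorem stmt19_general (K : Type*) [Field K] [NeZero (2 : K)] (k : ℕ) (hk : 1 ≤ k) :
    (k = 1 → ∃ Φ : (Mk2 k → K) ≃ₗ[K] (ℤ → K × K),
      (∀ c, Φ (tAct K k c) = fun n => Φ c (n - 1)) ∧
      (∀ c, Φ (hAct K k c) = fun n => (Φ c n).swap)) ∧
    (Odd k → 3 ≤ k → ∃ Φ : (Mk2 k → K) ≃ₗ[K] (ℕ → ℤ → K × K),
      (∀ c, Φ (tAct K k c) = fun j n => Φ c j (n - 1)) ∧
      (∀ c, Φ (hAct K k c) = fun j n => (Φ c j n).swap)) ∧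
    (Even k → ∃ Φ : (Mk2 k → K) ≃ₗ[K] ((ℕ → ℤ → K × K) × (ℕ → ℤ → K)),
      (∀ c, Φ (tAct K k c) =
        ((fun j n => (Φ c).1 j (n - 1)), (fun j n => (Φ c).2 j (n - 1)))) ∧
      (∀ c, Φ (hAct K k c) = ((fun j n => ((Φ c).1 j n).swap), (Φ c).2))) := by
  have : NeZero k := ⟨by omega⟩
  refine ⟨?_, friezeIso_odd, friezeIso_even⟩
  rintro rfl
  exact friezeIso_one

/-- As representations of `F₆ ≅ ℤ × ℤ/2ℤ` over `K`: `P₁[X,Y]` is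
isomorphic to `W = (K ⊕ K)^ℤ` (shift action of `ℤ`, coordinate swap for `ℤ/2ℤ`); for odd
`k ≥ 3`, `P_k[X,Y]` is a countably infinite product of copies of `W`; and for even `k`,
`P_k[X,Y]` is the product of a countably infinite product of copies of `W` with a
countably infinite product of copies of `U = K^ℤ` (shift action, trivial `ℤ/2ℤ`-action). -/
theorem stmt19 (K : Type*) [Field K] [CharZero K] (k : ℕ) (hk : 1 ≤ k) :
    (k = 1 → ∃ Φ : (Mk2 k → K) ≃ₗ[K] (ℤ → K × K),
      (∀ c, Φ (tAct K k c) = fun n => Φ c (n - 1)) ∧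
      (∀ c, Φ (hAct K k c) = fun n => (Φ c n).swap)) ∧
    (Odd k → 3 ≤ k → ∃ Φ : (Mk2 k → K) ≃ₗ[K] (ℕ → ℤ → K × K),
      (∀ c, Φ (tAct K k c) = fun j n => Φ c j (n - 1)) ∧
      (∀ c, Φ (hAct K k c) = fun j n => (Φ c j n).swap)) ∧
    (Even k → ∃ Φ : (Mk2 k → K) ≃ₗ[K] ((ℕ → ℤ → K × K) × (ℕ → ℤ → K)),
      (∀ c, Φ (tAct K k c) =
        ((fun j n => (Φ c).1 j (n - 1)), (fun j n => (Φ c).2 j (n - 1)))) ∧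
      (∀ c, Φ (hAct K k c) = ((fun j n => ((Φ c).1 j n).swap), (Φ c).2))) :=
  stmt19_general K k hk
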